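/- Define I(x) = ∫_0^x e^{u²/2} · erf(u/√2) du for real x. Then for every real number S and every integer n ≥ 0, the improper integral (1/√(2π)) ∫_{-∞}^∞ [exp(η·S - η²·n/2) - 1] · e^{-η²/2} dη/|η| converges and equals I(S/√(n+1)) - (1/√(2π))·ln(1+n). Moreover I(x) ≥ 0 for all x, so this quantity is at least -(1/√(2π))·ln(1+n). -/

import Mathlib

open MeasureTheory Real

/-- The Gauss error function `erf z = (2/√π) ∫_0^z e^{-t²} dt`. -/
noncomputable def erf (z : ℝ) : ℝ := (2 / Real.sqrt π) * ∫ t in (0 : ℝ)..z, Real.exp (-t ^ 2)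

/-- The function `I x = ∫_0^x e^{u²/2} erf(u/√2) du`. -/
noncomputable def I (x : ℝ) : ℝ :=
  ∫ u in (0 : ℝ)..x, Real.exp (u ^ 2 / 2) * erf (u / Real.sqrt 2)


lemma erf_nonneg' {z : ℝ} (hz : 0 ≤ z) : 0 ≤ erf z := by
  unfold erf
  have := intervalIntegral.integral_nonneg (μ := volume) hz (fun t _ => (Real.exp_pos (-t ^ 2)).le)
  positivity

lemma erf_nonpos' {z : ℝ} (hz : z ≤ 0) : erf z ≤ 0 := by
  unfold erf
  have := intervalIntegral.integral_nonneg (μ := volume) hz (fun t _ => (Real.exp_pos (-t ^ 2)).le)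
  rw [intervalIntegral.integral_symm]
  have h2 : 0 ≤ 2 / Real.sqrt π := by positivity
  nlinarith [mul_nonneg h2 this]

lemma I_nonneg' (x : ℝ) : 0 ≤ I x := by
  unfold I
  rcases le_total 0 x with hx | hx
  · apply intervalIntegral.integral_nonneg hx
    intro u hu
    exact mul_nonneg (Real.exp_pos _).le (erf_nonneg' (div_nonneg hu.1 (Real.sqrt_nonneg _)))
  · rw [intervalIntegral.integral_symm, ← intervalIntegral.integral_neg]
    apply intervalIntegral.integral_nonneg hx
    intro u hu
    rw [← mul_neg]
    exact mul_nonneg (Real.exp_pos _).le (neg_nonneg.2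
      (erf_nonpos' (div_nonpos_of_nonpos_of_nonneg hu.2 (Real.sqrt_nonneg _))))

lemma int_bound (R : ℝ) : Integrable (fun t : ℝ => Real.exp (R * |t|) * Real.exp (-t ^ 2 / 2)) := by
  have h : Integrable (fun t : ℝ => Real.exp (R ^ 2) * Real.exp (-(1/4) * t ^ 2)) :=
    (integrable_exp_neg_mul_sq (by norm_num)).const_mul _
  refine h.mono' (by fun_prop) (ae_of_all _ fun t => ?_)
  rw [Real.norm_of_nonneg (by positivity), ← Real.exp_add, ← Real.exp_add]
  apply Real.exp_le_exp.2
  nlinarith [sq_nonneg (R - |t| / 2), sq_abs t]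

lemma abs_exp_sub_one_le' (y : ℝ) : |Real.exp y - 1| ≤ |y| * Real.exp |y| := by
  rcases le_total 0 y with hy | hy
  · rw [abs_of_nonneg hy, abs_of_nonneg (by linarith [Real.one_le_exp hy])]
    have h := Real.add_one_le_exp (-y)
    have h2 : Real.exp y * Real.exp (-y) = 1 := by rw [← Real.exp_add]; simp
    nlinarith [Real.exp_pos y]
  · rw [abs_of_nonpos hy, abs_of_nonpos (by linarith [Real.exp_le_one_iff.2 hy])]
    have h := Real.add_one_le_exp y
    have h2 := Real.one_le_exp (neg_nonneg.2 hy)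
    nlinarith

noncomputable def gx (x t : ℝ) : ℝ := (Real.exp (t * x) - 1) * Real.exp (-t ^ 2 / 2) / |t|

lemma gx_meas (x : ℝ) : AEStronglyMeasurable (gx x) volume := by
  unfold gx
  apply Measurable.aestronglyMeasurable
  fun_prop

lemma gx_int (x : ℝ) : Integrable (gx x) := by
  refine ((int_bound |x|).const_mul |x|).mono' (gx_meas x) (ae_of_all _ fun t => ?_)
  unfold gx
  rw [norm_div, norm_mul, Real.norm_eq_abs, Real.norm_eq_abs, Real.norm_eq_abs, abs_abs,
    Real.abs_exp]
  rcases eq_or_ne t 0 with rfl | ht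
  · simp
  · rw [div_le_iff₀ (abs_pos.2 ht)]
    have := abs_exp_sub_one_le' (t * x)
    rw [abs_mul] at this
    calc _ ≤ (|t| * |x| * Real.exp (|t| * |x|)) * Real.exp (-t ^ 2 / 2) := by gcongr
      _ = _ := by rw [mul_comm |t| |x|]; ring

lemma sign_meas : Measurable (fun t : ℝ => t / |t|) := by fun_prop

lemma abs_sgn_le (t : ℝ) : |t / (|t|)| ≤ 1 := by
  rw [abs_div, abs_abs]; exact div_self_le_one _

lemma gx_deriv (x : ℝ) : HasDerivAt (fun x => ∫ t, gx x t)
    (∫ t : ℝ, t / |t| * Real.exp (t * x) * Real.exp (-t ^ 2 / 2)) x := by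
  have key := hasDerivAt_integral_of_dominated_loc_of_deriv_le (μ := (volume : Measure ℝ))
    (bound := fun t : ℝ => Real.exp ((|x| + 1) * |t|) * Real.exp (-t ^ 2 / 2))
    (F := gx) (x₀ := x) (s := Metric.ball x 1)
    (F' := fun x t => t / |t| * Real.exp (t * x) * Real.exp (-t ^ 2 / 2))
    (Metric.ball_mem_nhds x one_pos) (Filter.Eventually.of_forall gx_meas) (gx_int x)
    (by apply Measurable.aestronglyMeasurable; fun_prop)
    (ae_of_all _ fun t y hy => ?_) (int_bound _) (ae_of_all _ fun t y hy => ?_)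
  · exact key.2
  · rw [norm_mul, norm_mul, Real.norm_eq_abs, Real.norm_eq_abs, Real.norm_eq_abs,
      Real.abs_exp, Real.abs_exp]
    have h1 : |y| ≤ |x| + 1 := by
      rw [Metric.mem_ball, Real.dist_eq] at hy
      have := abs_sub_abs_le_abs_sub y x
      linarith
    have h2 : t * y ≤ (|x| + 1) * |t| := by
      calc t * y ≤ |t * y| := le_abs_self _
        _ = |y| * |t| := by rw [abs_mul, mul_comm]
        _ ≤ _ := by gcongr
    calc _ ≤ 1 * Real.exp ((|x| + 1) * |t|) * Real.exp (-t ^ 2 / 2) := by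
          gcongr; exact abs_sgn_le t
      _ = _ := by ring
  · unfold gx
    have h := (((((hasDerivAt_id y).const_mul t).exp).sub_const 1).mul_const
      (Real.exp (-t ^ 2 / 2))).div_const |t|
    refine h.congr_deriv ?_
    simp only [id]
    ring

lemma int_phi : Integrable (fun t : ℝ => Real.exp (-t ^ 2 / 2)) := by
  have := int_bound 0
  simpa using this

lemma erf_eq (x : ℝ) : Real.sqrt (2 * π) * erf (x / Real.sqrt 2)
    = 2 * ∫ t in (0:ℝ)..x, Real.exp (-t ^ 2 / 2) := by
  unfold erf
  have h := intervalIntegral.integral_comp_div (a := 0) (b := x) (c := Real.sqrt 2)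
    (fun t : ℝ => Real.exp (-t ^ 2)) (by positivity)
  simp only [div_pow, zero_div, smul_eq_mul] at h
  rw [Real.sq_sqrt (by norm_num)] at h
  simp only [neg_div]
  rw [h, Real.sqrt_mul (by norm_num)]
  have : Real.sqrt π ≠ 0 := by positivity
  field_simp

lemma sgn_int (x : ℝ) : ∫ t : ℝ, (t + x) / |t + x| * Real.exp (-t ^ 2 / 2)
    = 2 * ∫ t in (0:ℝ)..x, Real.exp (-t ^ 2 / 2) := by
  have hi : Integrable (fun t : ℝ => (t + x) / |t + x| * Real.exp (-t ^ 2 / 2)) := by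
    refine int_phi.mono' (by apply Measurable.aestronglyMeasurable; fun_prop)
      (ae_of_all _ fun t => ?_)
    rw [norm_mul, Real.norm_eq_abs, Real.norm_eq_abs, Real.abs_exp]
    exact mul_le_of_le_one_left (Real.exp_pos _).le (abs_sgn_le _)
  have e0 : ∀ a b : ℝ, IntervalIntegrable (fun t : ℝ => Real.exp (-t ^ 2 / 2)) volume a b :=
    fun a b => int_phi.intervalIntegrable
  rw [← integral_add_compl (measurableSet_Ioi (a := -x)) hi, Set.compl_Ioi]
  have e1 : ∫ t in Set.Ioi (-x), (t + x) / |t + x| * Real.exp (-t ^ 2 / 2)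
      = ∫ t in Set.Ioi (-x), Real.exp (-t ^ 2 / 2) := by
    apply setIntegral_congr_fun measurableSet_Ioi
    intro t ht
    have : 0 < t + x := by have : -x < t := ht; linarith
    simp only
    rw [abs_of_pos this, div_self this.ne', one_mul]
  have e2 : ∫ t in Set.Iic (-x), (t + x) / |t + x| * Real.exp (-t ^ 2 / 2)
      = - ∫ t in Set.Iic (-x), Real.exp (-t ^ 2 / 2) := by
    rw [integral_Iic_eq_integral_Iio, integral_Iic_eq_integral_Iio, ← integral_neg]
    apply setIntegral_congr_fun measurableSet_Iio
    intro t ht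
    have : t + x < 0 := by have : t < -x := ht; linarith
    simp only
    rw [abs_of_neg this, div_neg, div_self this.ne]; ring
  have e3 := integral_comp_neg_Iic x (fun t : ℝ => Real.exp (-t ^ 2 / 2))
  have e4 := intervalIntegral.integral_Iic_sub_Iic (a := -x) (b := x)
    int_phi.integrableOn int_phi.integrableOn
  have e5 := intervalIntegral.integral_comp_neg (a := 0) (b := x)
    (fun t : ℝ => Real.exp (-t ^ 2 / 2))
  have e6 := intervalIntegral.integral_add_adjacent_intervals (e0 (-x) 0) (e0 0 x)
  simp only [neg_sq, neg_zero] at e3 e5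
  rw [e1, e2, ← e3]
  linarith

lemma gderiv_eq (x : ℝ) : ∫ t : ℝ, t / |t| * Real.exp (t * x) * Real.exp (-t ^ 2 / 2)
    = Real.sqrt (2 * π) * (Real.exp (x ^ 2 / 2) * erf (x / Real.sqrt 2)) := by
  rw [mul_left_comm, erf_eq, ← sgn_int, ← integral_const_mul,
    ← integral_sub_right_eq_self (fun t : ℝ => Real.exp (x ^ 2 / 2) *
      ((t + x) / |t + x| * Real.exp (-t ^ 2 / 2))) x]
  congr 1
  ext t
  rw [sub_add_cancel, mul_left_comm, ← Real.exp_add, mul_assoc, ← Real.exp_add]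
  congr 2
  ring

lemma erf_cont : Continuous erf := by
  unfold erf
  refine continuous_const.mul ?_
  exact intervalIntegral.continuous_primitive
    (fun a b => (by fun_prop : Continuous fun t : ℝ => Real.exp (-t ^ 2)).intervalIntegrable a b) 0

lemma gx_eq (x : ℝ) : ∫ t, gx x t = Real.sqrt (2 * π) * I x := by
  have h := intervalIntegral.integral_eq_sub_of_hasDerivAt (a := 0) (b := x)
    (f := fun x => ∫ t, gx x t)
    (f' := fun u => Real.sqrt (2 * π) * (Real.exp (u ^ 2 / 2) * erf (u / Real.sqrt 2)))
    (fun u _ => by rw [← gderiv_eq]; exact gx_deriv u)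
    (by
      apply Continuous.intervalIntegrable
      have := erf_cont
      fun_prop)
  rw [intervalIntegral.integral_const_mul] at h
  have h0 : ∫ t, gx 0 t = 0 := by simp [gx]
  simp only [h0, sub_zero] at h
  exact h.symm

noncomputable def fr (n : ℕ) (t : ℝ) : ℝ :=
  (Real.exp (-(t ^ 2 * n / 2)) - 1) * Real.exp (-t ^ 2 / 2) / |t|

lemma fr_int (n : ℕ) : Integrable (fr n) := by
  refine ((int_bound 1).const_mul ((n : ℝ) / 2)).mono' (by
    unfold fr; apply Measurable.aestronglyMeasurable; fun_prop) (ae_of_all _ fun t => ?_)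
  unfold fr
  rw [norm_div, norm_mul, Real.norm_eq_abs, Real.norm_eq_abs, Real.norm_eq_abs, abs_abs,
    Real.abs_exp]
  rcases eq_or_ne t 0 with rfl | ht
  · simp; positivity
  · rw [div_le_iff₀ (abs_pos.2 ht)]
    have hnn : 0 ≤ t ^ 2 * n / 2 := by positivity
    have h1 : |Real.exp (-(t ^ 2 * n / 2)) - 1| ≤ t ^ 2 * n / 2 := by
      rw [abs_of_nonpos (by linarith [Real.exp_le_one_iff.2 (neg_nonpos.2 hnn)])]
      linarith [Real.add_one_le_exp (-(t ^ 2 * n / 2))]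
    have h2 : |t| ≤ Real.exp (1 * |t|) := by
      rw [one_mul]; linarith [Real.add_one_le_exp |t|]
    calc _ ≤ (t ^ 2 * n / 2) * Real.exp (-t ^ 2 / 2) := by gcongr
      _ = (n / 2 * (|t| * Real.exp (-t ^ 2 / 2))) * |t| := by rw [← sq_abs t]; ring
      _ ≤ _ := by gcongr

lemma fr_eq (n : ℕ) : ∫ t, fr n t = - Real.log (1 + n) := by
  have hs : (Real.sqrt (n + 1)) ^ 2 = n + 1 := Real.sq_sqrt (by positivity)
  have heq : ∀ t ∈ Set.Ioi (0:ℝ), fr n t = t⁻¹ • (Real.exp (-(Real.sqrt (n + 1) * t) ^ 2 / 2)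
      - Real.exp (-(1 * t) ^ 2 / 2)) := by
    intro t ht
    have ht : 0 < t := ht
    unfold fr
    rw [abs_of_pos ht, sub_mul, ← Real.exp_add, mul_pow, hs, smul_eq_mul, div_eq_inv_mul, one_mul,
      one_mul]
    congr 4
    ring
  have h := Frullani.integral_Ioi_eq (f := fun t : ℝ => Real.exp (-t ^ 2 / 2))
    (a := Real.sqrt (n + 1)) (b := 1) (L := 1) (R := 0)
    ((by fun_prop : Continuous (fun t : ℝ => Real.exp (-t ^ 2 / 2))).locallyIntegrable.locallyIntegrableOn _)
    (by positivity) one_pos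
    (by
      have : Continuous (fun t : ℝ => Real.exp (-t ^ 2 / 2)) := by fun_prop
      have h := (this.tendsto 0).mono_left (nhdsWithin_le_nhds (s := Set.Ioi 0))
      simpa using h)
    (by
      apply Real.tendsto_exp_atBot.comp
      have h : Filter.Tendsto (fun t : ℝ => t ^ 2 / 2) Filter.atTop Filter.atTop :=
        (Filter.tendsto_pow_atTop two_ne_zero).atTop_div_const (by norm_num)
      simp only [neg_div]
      exact Filter.tendsto_neg_atTop_atBot.comp h)
    ((fr_int n).integrableOn.congr_fun heq measurableSet_Ioi)
  rw [← setIntegral_congr_fun measurableSet_Ioi heq] at h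
  have h2 := integral_comp_abs (f := fr n)
  have h3 : ∀ t, fr n |t| = fr n t := fun t => by unfold fr; rw [sq_abs, abs_abs]
  simp only [h3] at h2
  rw [h2, h, one_div, Real.log_inv, Real.log_sqrt (by positivity), add_comm (n : ℝ) 1]
  simp only [smul_eq_mul]; ring

lemma decomp (S : ℝ) (n : ℕ) : (fun η : ℝ =>
      (Real.exp (η * S - η ^ 2 * n / 2) - 1) * Real.exp (-η ^ 2 / 2) / |η|)
    = fun η => Real.sqrt (n + 1) * gx (S / Real.sqrt (n + 1)) (Real.sqrt (n + 1) * η) + fr n η := by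
  ext η
  have hs : (Real.sqrt (n + 1)) ^ 2 = n + 1 := Real.sq_sqrt (by positivity)
  have hp : 0 < Real.sqrt (n + 1) := by positivity
  unfold gx fr
  rw [abs_mul, abs_of_pos hp, mul_pow, hs]
  have e1 : Real.sqrt (n + 1) * η * (S / Real.sqrt (n + 1)) = η * S := by field_simp
  have e2 : Real.exp (-((n + 1) * η ^ 2) / 2)
      = Real.exp (-(η ^ 2 * n / 2)) * Real.exp (-η ^ 2 / 2) := by
    rw [← Real.exp_add]; congr 1; ring
  rw [e1, e2, sub_eq_add_neg (η * S), Real.exp_add, ← mul_div_assoc, mul_div_mul_left _ _ hp.ne']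
  ring

theorem gaussian_mixture_rewrite (S : ℝ) (n : ℕ) :
    Integrable (fun η : ℝ =>
      (Real.exp (η * S - η ^ 2 * n / 2) - 1) * Real.exp (-η ^ 2 / 2) / |η|) ∧
    (1 / Real.sqrt (2 * π)) *
        ∫ η : ℝ, (Real.exp (η * S - η ^ 2 * n / 2) - 1) * Real.exp (-η ^ 2 / 2) / |η| =
      I (S / Real.sqrt (n + 1)) - (1 / Real.sqrt (2 * π)) * Real.log (1 + n) ∧
    (∀ x : ℝ, 0 ≤ I x) ∧
    -(1 / Real.sqrt (2 * π)) * Real.log (1 + n) ≤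
      (1 / Real.sqrt (2 * π)) *
        ∫ η : ℝ, (Real.exp (η * S - η ^ 2 * n / 2) - 1) * Real.exp (-η ^ 2 / 2) / |η| := by
  have hp : 0 < Real.sqrt ((n : ℝ) + 1) := by positivity
  have hg := ((gx_int (S / Real.sqrt (n + 1))).comp_mul_left' hp.ne').const_mul
    (Real.sqrt ((n : ℝ) + 1))
  have hval : (1 / Real.sqrt (2 * π)) *
        ∫ η : ℝ, (Real.exp (η * S - η ^ 2 * n / 2) - 1) * Real.exp (-η ^ 2 / 2) / |η| =
      I (S / Real.sqrt (n + 1)) - (1 / Real.sqrt (2 * π)) * Real.log (1 + n) := by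
    rw [decomp, integral_add hg (fr_int n), fr_eq, integral_const_mul,
      Measure.integral_comp_mul_left, gx_eq, abs_of_pos (inv_pos.2 hp), smul_eq_mul]
    have : 0 < Real.sqrt (2 * π) := by positivity
    field_simp
    ring
  refine ⟨?_, hval, I_nonneg', ?_⟩
  · rw [decomp]
    exact hg.add (fr_int n)
  · rw [hval]
    linarith [I_nonneg' (S / Real.sqrt (n + 1))]
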